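/- Suppose there exist θ^L < θ^H in (0,1) such that, wherever u'' exists, u''(θ) < 0 for θ ∈ [0,θ^L), u''(θ) > 0 for θ ∈ (θ^L,θ^H), and u''(θ) < 0 for θ ∈ (θ^H,1]. If there exist θ_*^L < θ_*^H in (θ^L,θ^H) such that u(m_*^L) + u'(m_*^L)·(θ_*^L − m_*^L) = u(θ_*^L) and u(m_*^H) + u'(m_*^H)·(θ_*^H − m_*^H) = u(θ_*^H), where m_*^L = E_F[θ|(0,θ_*^L)] and m_*^H = E_F[θ|(θ_*^H,1)], then the open pooling set P_* = [0,θ_*^L) ∪ (θ_*^H,1] is optimal for u; moreover m_*^L ∈ (0,θ^L) and m_*^H ∈ (θ^H,1). -/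

import Mathlib

open MeasureTheory Set
open scoped Classical

noncomputable section

/-- CDF associated with the density `f` (relevant on `[0,1]`): `F(x) = ∫_0^x f`. -/
def cdfF (f : ℝ → ℝ) (x : ℝ) : ℝ := ∫ t in (0:ℝ)..x, f t

/-- Conditional mean `E_F[θ | (ξ,ζ)]` of `θ` on the interval `(ξ, ζ)` under density `f`. -/
def condMean (f : ℝ → ℝ) (ξ ζ : ℝ) : ℝ :=
  (∫ t in ξ..ζ, t * f t) / (∫ t in ξ..ζ, f t)

/-- `f` is a strictly positive density of a probability measure on `[0,1]`. -/
def IsDensity (f : ℝ → ℝ) : Prop :=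
  (∀ θ ∈ Icc (0:ℝ) 1, 0 < f θ) ∧ IntegrableOn f (Icc (0:ℝ) 1) ∧
    (∫ t in (0:ℝ)..1, f t) = 1

/-- An open pooling set: a relatively open subset of `[0,1]`. -/
def IsPoolingSet (P : Set ℝ) : Prop :=
  ∃ U : Set ℝ, IsOpen U ∧ P = U ∩ Icc (0:ℝ) 1

/-- Left endpoint `ξ_i` of the interval component of `θ` in `P`. -/
def compInf (P : Set ℝ) (θ : ℝ) : ℝ := sInf (connectedComponentIn P θ)

/-- Right endpoint `ζ_i` of the interval component of `θ` in `P`. -/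
def compSup (P : Set ℝ) (θ : ℝ) : ℝ := sSup (connectedComponentIn P θ)

/-- The posterior-mean map induced by the pooling set `P`: states in a pooled
interval are mapped to the conditional mean of that interval, other states to
themselves. -/
def poolMean (f : ℝ → ℝ) (P : Set ℝ) (θ : ℝ) : ℝ :=
  if θ ∈ P then condMean f (compInf P θ) (compSup P θ) else θ

/-- The induced distribution `G_P` of posterior means. -/
def Gp (f : ℝ → ℝ) (P : Set ℝ) (θ : ℝ) : ℝ :=
  if θ ∈ P then
    (if θ < condMean f (compInf P θ) (compSup P θ) then cdfF f (compInf P θ)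
     else cdfF f (compSup P θ))
  else cdfF f θ

/-- `Γ_P(θ) = ∫_0^θ G_P(t) dt`. -/
def Gam (f : ℝ → ℝ) (P : Set ℝ) (θ : ℝ) : ℝ := ∫ t in (0:ℝ)..θ, Gp f P t

/-- The value `∫_0^1 u(θ) dG_P(θ)` of the pooling set `P` under payoff `u`,
written as the expectation of `u` composed with the posterior-mean map. -/
def poolValue (f : ℝ → ℝ) (u : ℝ → ℝ) (P : Set ℝ) : ℝ :=
  ∫ θ in (0:ℝ)..1, u (poolMean f P θ) * f θ

/-- `P` is an optimal pooling set for `u`. -/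
def IsOptimal (f : ℝ → ℝ) (u : ℝ → ℝ) (P : Set ℝ) : Prop :=
  IsPoolingSet P ∧ ∀ Q : Set ℝ, IsPoolingSet Q → poolValue f u Q ≤ poolValue f u P

/-- `u` is continuously differentiable on `[0,1]` with derivative `u'`, and `u'`
is absolutely continuous with integrable a.e. derivative `u''` (encoded via the
fundamental theorem of calculus). -/
def C1AC (u u' u'' : ℝ → ℝ) : Prop :=
  (∀ θ ∈ Icc (0:ℝ) 1, HasDerivAt u (u' θ) θ) ∧
  ContinuousOn u' (Icc (0:ℝ) 1) ∧
  IntegrableOn u'' (Icc (0:ℝ) 1) ∧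
  (∀ θ ∈ Icc (0:ℝ) 1, u' θ = u' 0 + ∫ t in (0:ℝ)..θ, u'' t)

/-!
Call `p` a price function if through each point of the graph of `u` there passes a line lying
below `p`. On a pooled interval with mean `m`, every line through `(m, u m)` has the same integral
against `f` as the constant `u m`, so no pooling set is worth more than `∫ p f`. The two-sided set
attains this bound for the `p` that equals `u` in the middle and, on each pooled interval, the
tangent to `u` at the mean of that interval. The tangency conditions make this `p` continuous and,
with the convexity of `u` between the inflection points, convex; concavity outside keeps `u` below
the tangents, so `p` is a price function.
-/

section Convexity

variable {u u' : ℝ → ℝ} {S : Set ℝ} {x y c d m k s t α : ℝ}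

lemma tangent_le_of_convexOn (hu : ConvexOn ℝ S u) (hx : x ∈ S) (hy : y ∈ S)
    (hd : HasDerivAt u d x) : u x + d * (y - x) ≤ u y := by
  rcases lt_trichotomy x y with h | rfl | h
  · have := hu.le_slope_of_hasDerivAt hx hy h hd
    rw [slope_def_field, le_div_iff₀ (sub_pos.2 h)] at this
    linarith
  · simp
  · have := hu.slope_le_of_hasDerivAt hy hx h hd
    rw [slope_def_field, div_le_iff₀ (sub_pos.2 h)] at this
    linarith

lemma tangent_lt_of_strictConvexOn (hu : StrictConvexOn ℝ S u) (hx : x ∈ S) (hy : y ∈ S)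
    (hxy : x ≠ y) (hd : HasDerivAt u d x) : u x + d * (y - x) < u y := by
  rcases hxy.lt_or_gt with h | h
  · have := hu.lt_slope_of_hasDerivAt hx hy h hd
    rw [slope_def_field, lt_div_iff₀ (sub_pos.2 h)] at this
    linarith
  · have := hu.slope_lt_of_hasDerivAt hy hx h hd
    rw [slope_def_field, div_lt_iff₀ (sub_pos.2 h)] at this
    linarith

lemma le_tangent_of_concaveOn (hu : ConcaveOn ℝ S u) (hx : x ∈ S) (hy : y ∈ S)
    (hd : HasDerivAt u d x) : u y ≤ u x + d * (y - x) := by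
  have := tangent_le_of_convexOn hu.neg hx hy hd.neg
  simp only [Pi.neg_apply] at this
  linarith

lemma monotoneOn_of_convexOn_of_hasDerivAt (hu : ConvexOn ℝ S u)
    (hd : ∀ x ∈ S, HasDerivAt u (u' x) x) : MonotoneOn u' S := by
  intro x hx y hy hxy
  rcases hxy.eq_or_lt with rfl | h
  · rfl
  · exact (hu.le_slope_of_hasDerivAt hx hy h (hd x hx)).trans
      (hu.slope_le_of_hasDerivAt hx hy h (hd y hy))

lemma le_line_of_convexOn (hu : ConvexOn ℝ S u) (hk : k ∈ S) (hs : s ∈ S)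
    (huk : u k ≤ c + α * (k - m)) (hus : u s ≤ c + α * (s - m)) (ht : t ∈ uIcc k s) :
    u t ≤ c + α * (t - m) := by
  rw [← segment_eq_uIcc] at ht
  obtain ⟨p, q, hp, hq, hpq, rfl⟩ := ht
  calc u (p • k + q • s) ≤ p * u k + q * u s := hu.2 hk hs hp hq hpq
    _ ≤ p * (c + α * (k - m)) + q * (c + α * (s - m)) := by gcongr
    _ = c + α * (p • k + q • s - m) := by
      simp only [smul_eq_mul]
      linear_combination (c - α * m) * hpq

lemma slope_sub_mul_nonneg_of_convexOn (hu : ConvexOn ℝ S u) (hk : k ∈ S) (hs : s ∈ S)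
    (hd : HasDerivAt u d s) (huk : u k ≤ c + α * (k - m)) (hus : c + α * (s - m) = u s) :
    0 ≤ (d - α) * (s - k) := by
  have := tangent_le_of_convexOn hu hs hk hd
  linarith

end Convexity

namespace C1AC

variable {u u' u'' : ℝ → ℝ} {a b : ℝ}

lemma continuousOn (hu : C1AC u u' u'') : ContinuousOn u (Icc 0 1) :=
  HasDerivAt.continuousOn hu.1

lemma neg (hu : C1AC u u' u'') : C1AC (-u) (-u') (-u'') := by
  obtain ⟨hd, hc, hi, hftc⟩ := hu
  refine ⟨fun θ hθ => (hd θ hθ).neg, hc.neg, hi.neg, fun θ hθ => ?_⟩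
  simp only [Pi.neg_apply, intervalIntegral.integral_neg, hftc θ hθ]
  ring

lemma sub_eq_integral (hu : C1AC u u' u'') (ha : 0 ≤ a) (hab : a ≤ b) (hb : b ≤ 1) :
    u' b - u' a = ∫ t in a..b, u'' t := by
  have hint : ∀ x ∈ Icc (0 : ℝ) 1, IntervalIntegrable u'' volume 0 x := fun x hx =>
    (intervalIntegrable_iff_integrableOn_Icc_of_le hx.1).2
      (hu.2.2.1.mono_set (Icc_subset_Icc_right hx.2))
  have ha' : a ∈ Icc (0 : ℝ) 1 := ⟨ha, hab.trans hb⟩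
  have hb' : b ∈ Icc (0 : ℝ) 1 := ⟨ha.trans hab, hb⟩
  rw [hu.2.2.2 a ha', hu.2.2.2 b hb',
    ← intervalIntegral.integral_interval_sub_left (hint b hb') (hint a ha')]
  ring

lemma strictConvexOn (hu : C1AC u u' u'') (ha : 0 ≤ a) (hb : b ≤ 1)
    (hpos : ∀ θ ∈ Ioo a b, 0 < u'' θ) : StrictConvexOn ℝ (Icc a b) u := by
  have hsub : Icc a b ⊆ Icc 0 1 := Icc_subset_Icc ha hb
  have hmono : StrictMonoOn u' (Icc a b) := by
    intro x hx y hy hxy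
    have hint : IntervalIntegrable u'' volume x y :=
      (intervalIntegrable_iff_integrableOn_Icc_of_le hxy.le).2
        (hu.2.2.1.mono_set (Icc_subset_Icc (hsub hx).1 (hsub hy).2))
    rw [← sub_pos, hu.sub_eq_integral (hsub hx).1 hxy.le (hsub hy).2]
    exact intervalIntegral.intervalIntegral_pos_of_pos_on hint
      (fun t ht => hpos t (Ioo_subset_Ioo hx.1 hy.2 ht)) hxy
  refine StrictMonoOn.strictConvexOn_of_deriv (convex_Icc a b) (hu.continuousOn.mono hsub) ?_
  exact (hmono.mono interior_subset).congr fun θ hθ =>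
    (hu.1 θ (hsub (interior_subset hθ))).deriv.symm

lemma strictConcaveOn (hu : C1AC u u' u'') (ha : 0 ≤ a) (hb : b ≤ 1)
    (hneg : ∀ θ ∈ Ioo a b, u'' θ < 0) : StrictConcaveOn ℝ (Icc a b) u :=
  neg_strictConvexOn_iff.1 (hu.neg.strictConvexOn ha hb fun θ hθ => neg_pos.2 (hneg θ hθ))

end C1AC

section CondMean

variable {f : ℝ → ℝ} {a b : ℝ}

lemma IsDensity.intervalIntegrable (hf : IsDensity f) (ha : 0 ≤ a) (hab : a ≤ b) (hb : b ≤ 1) :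
    IntervalIntegrable f volume a b :=
  (intervalIntegrable_iff_integrableOn_Icc_of_le hab).2 (hf.2.1.mono_set (Icc_subset_Icc ha hb))

lemma IsDensity.integral_pos (hf : IsDensity f) (ha : 0 ≤ a) (hab : a < b) (hb : b ≤ 1) :
    0 < ∫ t in a..b, f t :=
  intervalIntegral.intervalIntegral_pos_of_pos_on (hf.intervalIntegrable ha hab.le hb)
    (fun x hx => hf.1 x (Icc_subset_Icc ha hb (Ioo_subset_Icc_self hx))) hab

lemma integral_line_mul_density (hf : IntervalIntegrable f volume a b)
    (hmass : ∫ t in a..b, f t ≠ 0) (c s : ℝ) :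
    ∫ t in a..b, (c + s * (t - condMean f a b)) * f t = c * ∫ t in a..b, f t := by
  have hmean : condMean f a b * ∫ t in a..b, f t = ∫ t in a..b, t * f t :=
    div_mul_cancel₀ _ hmass
  have hmoment : IntervalIntegrable (fun t => t * f t) volume a b :=
    hf.continuousOn_mul continuousOn_id
  have hsplit : ∀ t, (c + s * (t - condMean f a b)) * f t =
      (c - s * condMean f a b) * f t + s * (t * f t) := fun t => by ring
  simp_rw [hsplit]
  rw [intervalIntegral.integral_add (hf.const_mul _) (hmoment.const_mul s),
    intervalIntegral.integral_const_mul, intervalIntegral.integral_const_mul, ← hmean]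
  ring

lemma condMean_mem_Ioo (hf : IntervalIntegrable f volume a b) (hab : a < b)
    (hpos : ∀ x ∈ Ioo a b, 0 < f x) : condMean f a b ∈ Ioo a b := by
  have hmass : 0 < ∫ t in a..b, f t :=
    intervalIntegral.intervalIntegral_pos_of_pos_on hf hpos hab
  have hmoment : IntervalIntegrable (fun t => t * f t) volume a b :=
    hf.continuousOn_mul continuousOn_id
  have hleft : 0 < ∫ t in a..b, (t * f t - a * f t) :=
    intervalIntegral.intervalIntegral_pos_of_pos_on (hmoment.sub (hf.const_mul a))
      (fun x hx => sub_pos.2 (mul_lt_mul_of_pos_right hx.1 (hpos x hx))) hab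
  have hright : 0 < ∫ t in a..b, (b * f t - t * f t) :=
    intervalIntegral.intervalIntegral_pos_of_pos_on ((hf.const_mul b).sub hmoment)
      (fun x hx => sub_pos.2 (mul_lt_mul_of_pos_right hx.2 (hpos x hx))) hab
  rw [intervalIntegral.integral_sub hmoment (hf.const_mul a),
    intervalIntegral.integral_const_mul, sub_pos] at hleft
  rw [intervalIntegral.integral_sub (hf.const_mul b) hmoment,
    intervalIntegral.integral_const_mul, sub_pos] at hright
  exact ⟨(lt_div_iff₀ hmass).2 hleft, (div_lt_iff₀ hmass).2 hright⟩

lemma IsDensity.condMean_mem_Ioo (hf : IsDensity f) (ha : 0 ≤ a) (hab : a < b) (hb : b ≤ 1) :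
    condMean f a b ∈ Ioo a b :=
  _root_.condMean_mem_Ioo (hf.intervalIntegrable ha hab.le hb) hab fun x hx =>
    hf.1 x (Icc_subset_Icc ha hb (Ioo_subset_Icc_self hx))

end CondMean

section Components

variable {X : Type*} [TopologicalSpace X]

/-- The connected components of a set `Q`, as subsets of the ambient space. For a pooling set
these are the intervals `(ξ_i, ζ_i)`, up to endpoints at `0` and `1`. -/
def components (Q : Set X) : Set (Set X) := connectedComponentIn Q '' Q

lemma sUnion_components (Q : Set X) : ⋃₀ components Q = Q := by
  refine Subset.antisymm (sUnion_subset ?_) fun x hx =>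
    ⟨_, mem_image_of_mem _ hx, mem_connectedComponentIn hx⟩
  rintro _ ⟨x, -, rfl⟩
  exact connectedComponentIn_subset Q x

lemma pairwiseDisjoint_components (Q : Set X) : (components Q).PairwiseDisjoint id := by
  rintro _ ⟨x, -, rfl⟩ _ ⟨y, -, rfl⟩ hne
  refine disjoint_left.2 fun z hzx hzy => hne ?_
  rw [connectedComponentIn_eq hzx, connectedComponentIn_eq hzy]

lemma connectedComponentIn_union_eq_left {A B : Set X} (hAB : SeparatedNhds A B)
    (hA : IsPreconnected A) {x : X} (hx : x ∈ A) : connectedComponentIn (A ∪ B) x = A := by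
  refine Subset.antisymm (fun y hy => ?_) (hA.subset_connectedComponentIn hx subset_union_left)
  obtain ⟨U, V, hU, hV, hAU, hBV, hUV⟩ := hAB
  have hyU : y ∈ U := isPreconnected_connectedComponentIn.subset_left_of_subset_union hU hV hUV
    ((connectedComponentIn_subset _ _).trans (union_subset_union hAU hBV))
    ⟨x, mem_connectedComponentIn (Or.inl hx), hAU hx⟩ hy
  exact (connectedComponentIn_subset _ _ hy).resolve_right fun hyB =>
    disjoint_left.1 hUV hyU (hBV hyB)

lemma measurableSet_of_mem_components {Q C : Set ℝ} (hC : C ∈ components Q) :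
    MeasurableSet C := by
  obtain ⟨x, -, rfl⟩ := hC
  exact isPreconnected_connectedComponentIn.ordConnected.measurableSet

end Components

lemma setIntegral_sUnion_mono {X : Type*} [MeasurableSpace X] {μ : Measure X} {g h : X → ℝ}
    {𝒞 : Set (Set X)} (hcount : 𝒞.Countable) (hmeas : ∀ C ∈ 𝒞, MeasurableSet C)
    (hdisj : 𝒞.PairwiseDisjoint id) (hg : IntegrableOn g (⋃₀ 𝒞) μ)
    (hh : IntegrableOn h (⋃₀ 𝒞) μ) (hle : ∀ C ∈ 𝒞, ∫ x in C, g x ∂μ ≤ ∫ x in C, h x ∂μ) :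
    ∫ x in ⋃₀ 𝒞, g x ∂μ ≤ ∫ x in ⋃₀ 𝒞, h x ∂μ := by
  have := hcount.to_subtype
  have hdisj' : Pairwise (Function.onFun Disjoint fun C : 𝒞 => (C : Set X)) :=
    fun C D hne => hdisj C.2 D.2 (Subtype.coe_injective.ne hne)
  rw [sUnion_eq_iUnion] at hg hh ⊢
  exact hasSum_le (fun C : 𝒞 => hle C C.2)
    (hasSum_integral_iUnion (fun C : 𝒞 => hmeas C C.2) hdisj' hg)
    (hasSum_integral_iUnion (fun C : 𝒞 => hmeas C C.2) hdisj' hh)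

namespace IsPoolingSet

variable {Q : Set ℝ} {x : ℝ}

lemma subset_Icc (hQ : IsPoolingSet Q) : Q ⊆ Icc 0 1 := by
  obtain ⟨U, -, rfl⟩ := hQ
  exact inter_subset_right

lemma measurableSet (hQ : IsPoolingSet Q) : MeasurableSet Q := by
  obtain ⟨U, hU, rfl⟩ := hQ
  exact hU.measurableSet.inter measurableSet_Icc

lemma component_subset_Icc_zero_one (hQ : IsPoolingSet Q) :
    connectedComponentIn Q x ⊆ Icc 0 1 :=
  (connectedComponentIn_subset Q x).trans hQ.subset_Icc

lemma component_subset_Icc (hQ : IsPoolingSet Q) :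
    connectedComponentIn Q x ⊆ Icc (compInf Q x) (compSup Q x) :=
  subset_Icc_csInf_csSup (bddBelow_Icc.mono hQ.component_subset_Icc_zero_one)
    (bddAbove_Icc.mono hQ.component_subset_Icc_zero_one)

lemma Ioo_subset_component (hQ : IsPoolingSet Q) (hx : x ∈ Q) :
    Ioo (compInf Q x) (compSup Q x) ⊆ connectedComponentIn Q x :=
  (isConnected_connectedComponentIn_iff.2 hx).Ioo_csInf_csSup_subset
    (bddBelow_Icc.mono hQ.component_subset_Icc_zero_one)
    (bddAbove_Icc.mono hQ.component_subset_Icc_zero_one)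

lemma compInf_nonneg (hQ : IsPoolingSet Q) (hx : x ∈ Q) : 0 ≤ compInf Q x :=
  le_csInf ⟨x, mem_connectedComponentIn hx⟩ fun _ hy => (hQ.component_subset_Icc_zero_one hy).1

lemma compSup_le_one (hQ : IsPoolingSet Q) (hx : x ∈ Q) : compSup Q x ≤ 1 :=
  csSup_le ⟨x, mem_connectedComponentIn hx⟩ fun _ hy => (hQ.component_subset_Icc_zero_one hy).2

lemma interior_component_nonempty (hQ : IsPoolingSet Q) (hx : x ∈ Q) :
    (interior (connectedComponentIn Q x)).Nonempty := by
  obtain ⟨U, hU, rfl⟩ := hQ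
  obtain ⟨ε, hε, hball⟩ := Metric.isOpen_iff.1 hU x hx.1
  have hclosure : x ∈ closure (Ioo (0 : ℝ) 1) := by
    rw [closure_Ioo zero_ne_one]
    exact hx.2
  obtain ⟨y, hy_ball, hy_Ioo⟩ :=
    mem_closure_iff.1 hclosure _ Metric.isOpen_ball (Metric.mem_ball_self hε)
  have hconn : IsPreconnected (Metric.ball x ε ∩ Icc 0 1) :=
    ((convex_ball x ε).inter (convex_Icc 0 1)).isPreconnected
  have hsub : Metric.ball x ε ∩ Icc 0 1 ⊆ connectedComponentIn (U ∩ Icc 0 1) x :=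
    hconn.subset_connectedComponentIn ⟨Metric.mem_ball_self hε, hx.2⟩
      (inter_subset_inter_left _ hball)
  refine ⟨y, interior_mono hsub ?_⟩
  rw [interior_inter, Metric.isOpen_ball.interior_eq, interior_Icc]
  exact ⟨hy_ball, hy_Ioo⟩

lemma compInf_lt_compSup (hQ : IsPoolingSet Q) (hx : x ∈ Q) : compInf Q x < compSup Q x := by
  obtain ⟨y, hy⟩ := hQ.interior_component_nonempty hx
  have hy' := interior_mono hQ.component_subset_Icc hy
  rw [interior_Icc] at hy'
  exact hy'.1.trans hy'.2

lemma countable_components (hQ : IsPoolingSet Q) : (components Q).Countable := by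
  refine (pairwiseDisjoint_components Q).countable_of_nonempty_interior ?_
  rintro _ ⟨x, hx, rfl⟩
  exact hQ.interior_component_nonempty hx

lemma setIntegral_component (hQ : IsPoolingSet Q) (hx : x ∈ Q) (g : ℝ → ℝ) :
    ∫ θ in connectedComponentIn Q x, g θ = ∫ θ in compInf Q x..compSup Q x, g θ := by
  have hae : connectedComponentIn Q x =ᵐ[volume] Ioc (compInf Q x) (compSup Q x) :=
    (hQ.component_subset_Icc.eventuallyLE.trans Ioc_ae_eq_Icc.symm.le).antisymm
      (Ioo_ae_eq_Ioc.symm.le.trans (hQ.Ioo_subset_component hx).eventuallyLE)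
  rw [setIntegral_congr_set hae, intervalIntegral.integral_of_le (hQ.compInf_lt_compSup hx).le]

end IsPoolingSet

section PoolValue

variable {f u p : ℝ → ℝ} {Q : Set ℝ} {x y : ℝ}

lemma poolMean_of_mem (hx : x ∈ Q) :
    poolMean f Q x = condMean f (compInf Q x) (compSup Q x) :=
  if_pos hx

lemma poolMean_of_notMem (hx : x ∉ Q) : poolMean f Q x = x :=
  if_neg hx

lemma poolMean_eq_of_mem_component (hy : y ∈ connectedComponentIn Q x) :
    poolMean f Q y = poolMean f Q x := by
  have hyQ : y ∈ Q := connectedComponentIn_subset Q x hy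
  have hxQ : x ∈ Q := connectedComponentIn_nonempty_iff.1 ⟨y, hy⟩
  simp only [poolMean_of_mem hyQ, poolMean_of_mem hxQ, compInf, compSup,
    connectedComponentIn_eq hy]

lemma poolMean_mem_Icc (hf : IsDensity f) (hQ : IsPoolingSet Q) (hx : x ∈ Icc (0 : ℝ) 1) :
    poolMean f Q x ∈ Icc (0 : ℝ) 1 := by
  by_cases hxQ : x ∈ Q
  · rw [poolMean_of_mem hxQ]
    exact Icc_subset_Icc (hQ.compInf_nonneg hxQ) (hQ.compSup_le_one hxQ) <| Ioo_subset_Icc_self <|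
      hf.condMean_mem_Ioo (hQ.compInf_nonneg hxQ) (hQ.compInf_lt_compSup hxQ)
        (hQ.compSup_le_one hxQ)
  · rwa [poolMean_of_notMem hxQ]

lemma aestronglyMeasurable_comp_poolMean (hu : ContinuousOn u (Icc 0 1)) (hQ : IsPoolingSet Q) :
    AEStronglyMeasurable (fun θ => u (poolMean f Q θ)) (volume.restrict (Icc 0 1)) := by
  rw [← union_sdiff_cancel hQ.subset_Icc, aestronglyMeasurable_union_iff]
  constructor
  · have := hQ.countable_components.to_subtype
    have hcomp : AEStronglyMeasurable (fun θ => u (poolMean f Q θ))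
        (volume.restrict (⋃ C : components Q, (C : Set ℝ))) := by
      refine aestronglyMeasurable_iUnion_iff.2 ?_
      rintro ⟨C, hC⟩
      have hmeas := measurableSet_of_mem_components hC
      obtain ⟨x, -, rfl⟩ := hC
      refine (aestronglyMeasurable_const (b := u (poolMean f Q x))).congr ?_
      exact ae_restrict_of_forall_mem hmeas fun y hy => by
        simp only [poolMean_eq_of_mem_component hy]
    rwa [← sUnion_eq_iUnion, sUnion_components] at hcomp
  · have hmeas : MeasurableSet (Icc 0 1 \ Q) := measurableSet_Icc.diff hQ.measurableSet
    refine ((hu.mono sdiff_subset).aestronglyMeasurable hmeas).congr ?_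
    exact ae_restrict_of_forall_mem hmeas fun y hy => by
      simp only [poolMean_of_notMem hy.2]

lemma integrableOn_comp_poolMean_mul (hf : IsDensity f) (hu : ContinuousOn u (Icc 0 1))
    (hQ : IsPoolingSet Q) :
    IntegrableOn (fun θ => u (poolMean f Q θ) * f θ) (Icc 0 1) := by
  obtain ⟨K, hK⟩ := isCompact_Icc.exists_bound_of_continuousOn hu
  exact Integrable.bdd_mul (c := K) hf.2.1 (aestronglyMeasurable_comp_poolMean hu hQ) <|
    ae_restrict_of_forall_mem measurableSet_Icc fun x hx => hK _ (poolMean_mem_Icc hf hQ hx)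

lemma poolValue_eq_setIntegral (f u : ℝ → ℝ) (Q : Set ℝ) :
    poolValue f u Q = ∫ θ in Icc 0 1, u (poolMean f Q θ) * f θ := by
  rw [poolValue, intervalIntegral.integral_of_le zero_le_one, integral_Icc_eq_integral_Ioc]

lemma poolValue_neg (f u : ℝ → ℝ) (Q : Set ℝ) : poolValue f (-u) Q = -poolValue f u Q := by
  simp only [poolValue, Pi.neg_apply, neg_mul, intervalIntegral.integral_neg]

lemma setIntegral_component_le (hf : IsDensity f) (hQ : IsPoolingSet Q) (hx : x ∈ Q)
    (hp : IntegrableOn (fun θ => p θ * f θ) (Icc 0 1)) {s : ℝ}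
    (hline : ∀ θ ∈ connectedComponentIn Q x,
      u (poolMean f Q x) + s * (θ - poolMean f Q x) ≤ p θ) :
    ∫ θ in connectedComponentIn Q x, u (poolMean f Q θ) * f θ ≤
      ∫ θ in connectedComponentIn Q x, p θ * f θ := by
  have hmeas := measurableSet_of_mem_components (mem_image_of_mem (connectedComponentIn Q) hx)
  have hsub : connectedComponentIn Q x ⊆ Icc 0 1 := hQ.component_subset_Icc_zero_one
  have hmass := hf.integral_pos (hQ.compInf_nonneg hx) (hQ.compInf_lt_compSup hx)
    (hQ.compSup_le_one hx)
  have hfint := hf.intervalIntegrable (hQ.compInf_nonneg hx) (hQ.compInf_lt_compSup hx).le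
    (hQ.compSup_le_one hx)
  have hlint : IntegrableOn
      (fun θ => (u (poolMean f Q x) + s * (θ - poolMean f Q x)) * f θ) (Icc 0 1) :=
    hf.2.1.continuousOn_mul (by fun_prop) isCompact_Icc
  calc ∫ θ in connectedComponentIn Q x, u (poolMean f Q θ) * f θ
      = ∫ θ in connectedComponentIn Q x, u (poolMean f Q x) * f θ :=
        setIntegral_congr_fun hmeas fun y hy => by
          simp only [poolMean_eq_of_mem_component hy]
    _ = ∫ θ in connectedComponentIn Q x,
          (u (poolMean f Q x) + s * (θ - poolMean f Q x)) * f θ := by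
        rw [hQ.setIntegral_component hx, hQ.setIntegral_component hx, poolMean_of_mem hx,
          integral_line_mul_density hfint hmass.ne', intervalIntegral.integral_const_mul]
    _ ≤ ∫ θ in connectedComponentIn Q x, p θ * f θ :=
        setIntegral_mono_on (hlint.mono_set hsub) (hp.mono_set hsub) hmeas fun θ hθ =>
          mul_le_mul_of_nonneg_right (hline θ hθ) (hf.1 θ (hsub hθ)).le

lemma poolValue_le_setIntegral (hf : IsDensity f) (hu : ContinuousOn u (Icc 0 1))
    (hp : IntegrableOn (fun θ => p θ * f θ) (Icc 0 1)) (hQ : IsPoolingSet Q)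
    (hpooled : ∀ x ∈ Q, ∃ s, ∀ θ ∈ connectedComponentIn Q x,
      u (poolMean f Q x) + s * (θ - poolMean f Q x) ≤ p θ)
    (hrevealed : ∀ θ ∈ Icc 0 1 \ Q, u θ ≤ p θ) :
    poolValue f u Q ≤ ∫ θ in Icc 0 1, p θ * f θ := by
  have hint := integrableOn_comp_poolMean_mul hf hu hQ
  have hmeas : MeasurableSet (Icc 0 1 \ Q) := measurableSet_Icc.diff hQ.measurableSet
  have hpooled_le : ∫ θ in Q, u (poolMean f Q θ) * f θ ≤ ∫ θ in Q, p θ * f θ := by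
    have hmono := setIntegral_sUnion_mono (μ := volume) (𝒞 := components Q)
      (g := fun θ => u (poolMean f Q θ) * f θ) (h := fun θ => p θ * f θ)
      hQ.countable_components (fun _ => measurableSet_of_mem_components)
      (pairwiseDisjoint_components Q)
    rw [sUnion_components] at hmono
    refine hmono (hint.mono_set hQ.subset_Icc) (hp.mono_set hQ.subset_Icc) ?_
    rintro _ ⟨x, hx, rfl⟩
    obtain ⟨s, hs⟩ := hpooled x hx
    exact setIntegral_component_le hf hQ hx hp hs
  have hrevealed_le : ∫ θ in Icc 0 1 \ Q, u (poolMean f Q θ) * f θ ≤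
      ∫ θ in Icc 0 1 \ Q, p θ * f θ := by
    refine setIntegral_mono_on (hint.mono_set sdiff_subset) (hp.mono_set sdiff_subset) hmeas
      fun θ hθ => ?_
    rw [poolMean_of_notMem hθ.2]
    exact mul_le_mul_of_nonneg_right (hrevealed θ hθ) (hf.1 θ hθ.1).le
  rw [poolValue_eq_setIntegral, ← union_sdiff_cancel hQ.subset_Icc,
    setIntegral_union disjoint_sdiff_right hmeas (hint.mono_set hQ.subset_Icc)
      (hint.mono_set sdiff_subset),
    setIntegral_union disjoint_sdiff_right hmeas (hp.mono_set hQ.subset_Icc)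
      (hp.mono_set sdiff_subset)]
  exact add_le_add hpooled_le hrevealed_le

lemma setIntegral_le_poolValue (hf : IsDensity f) (hu : ContinuousOn u (Icc 0 1))
    (hp : IntegrableOn (fun θ => p θ * f θ) (Icc 0 1)) (hQ : IsPoolingSet Q)
    (hpooled : ∀ x ∈ Q, ∃ s, ∀ θ ∈ connectedComponentIn Q x,
      p θ ≤ u (poolMean f Q x) + s * (θ - poolMean f Q x))
    (hrevealed : ∀ θ ∈ Icc 0 1 \ Q, p θ ≤ u θ) :
    ∫ θ in Icc 0 1, p θ * f θ ≤ poolValue f u Q := by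
  have hp_neg : IntegrableOn (fun θ => (-p) θ * f θ) (Icc 0 1) := by
    simp only [Pi.neg_apply, neg_mul]
    exact hp.neg
  have h := poolValue_le_setIntegral hf hu.neg hp_neg hQ
    (fun x hx => by
      obtain ⟨s, hs⟩ := hpooled x hx
      refine ⟨-s, fun θ hθ => ?_⟩
      simp only [Pi.neg_apply]
      linarith [hs θ hθ])
    (fun θ hθ => neg_le_neg (hrevealed θ hθ))
  simpa only [poolValue_neg, Pi.neg_apply, neg_mul, integral_neg, neg_le_neg_iff] using h

/-- `p` is a price function for the payoff `u`: the multiplier certifying optimality in the linear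
program over distributions of posterior means. The usual requirement that `p` be convex with
`u ≤ p` is encoded by its consequence that through each point of the graph of `u` there passes a
line lying below `p`. -/
def IsPrice (u p : ℝ → ℝ) : Prop :=
  ∀ m ∈ Icc (0 : ℝ) 1, ∃ s, ∀ θ ∈ Icc (0 : ℝ) 1, u m + s * (θ - m) ≤ p θ

lemma IsPrice.poolValue_le (h : IsPrice u p) (hf : IsDensity f) (hu : ContinuousOn u (Icc 0 1))
    (hp : IntegrableOn (fun θ => p θ * f θ) (Icc 0 1)) (hQ : IsPoolingSet Q) :
    poolValue f u Q ≤ ∫ θ in Icc 0 1, p θ * f θ := by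
  refine poolValue_le_setIntegral hf hu hp hQ (fun x hx => ?_) fun θ hθ => ?_
  · obtain ⟨s, hs⟩ := h _ (poolMean_mem_Icc hf hQ (hQ.subset_Icc hx))
    exact ⟨s, fun θ hθ => hs θ (hQ.component_subset_Icc_zero_one hθ)⟩
  · obtain ⟨s, hs⟩ := h θ hθ.1
    simpa only [sub_self, mul_zero, add_zero] using hs θ hθ.1

theorem IsPrice.isOptimal (h : IsPrice u p) (hf : IsDensity f) (hu : ContinuousOn u (Icc 0 1))
    (hp : IntegrableOn (fun θ => p θ * f θ) (Icc 0 1)) (hQ : IsPoolingSet Q)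
    (hpooled : ∀ x ∈ Q, ∃ s, ∀ θ ∈ connectedComponentIn Q x,
      p θ = u (poolMean f Q x) + s * (θ - poolMean f Q x))
    (hrevealed : ∀ θ ∈ Icc 0 1 \ Q, p θ = u θ) : IsOptimal f u Q :=
  ⟨hQ, fun _ hR => (h.poolValue_le hf hu hp hR).trans <|
    setIntegral_le_poolValue hf hu hp hQ
      (fun x hx => (hpooled x hx).imp fun _ hs θ hθ => (hs θ hθ).le)
      fun θ hθ => (hrevealed θ hθ).le⟩

end PoolValue

section LinearExtension

variable {u u' : ℝ → ℝ} {a b c k s α β θ : ℝ}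

/-- The function equal to `u` on `[a, b]` and extended by lines of slope `α` to the left of `a`
and `β` to the right of `b`; it is the price function of two-sided pooling. The formula via `max`
and `min` makes continuity immediate. -/
def linearExtension (u : ℝ → ℝ) (a b α β θ : ℝ) : ℝ :=
  u (max a (min θ b)) + α * min (θ - a) 0 + β * max (θ - b) 0

lemma linearExtension_of_le (hab : a ≤ b) (h : θ ≤ a) :
    linearExtension u a b α β θ = u a + α * (θ - a) := by
  rw [linearExtension, min_eq_left (h.trans hab), max_eq_left h, min_eq_left (by linarith),
    max_eq_right (by linarith)]
  ring

lemma linearExtension_of_mem_Icc (h : θ ∈ Icc a b) : linearExtension u a b α β θ = u θ := by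
  rw [linearExtension, min_eq_left h.2, max_eq_right h.1, min_eq_right (by linarith [h.1]),
    max_eq_right (by linarith [h.2])]
  ring

lemma linearExtension_of_ge (hab : a ≤ b) (h : b ≤ θ) :
    linearExtension u a b α β θ = u b + β * (θ - b) := by
  rw [linearExtension, min_eq_right h, max_eq_right hab, min_eq_right (by linarith),
    max_eq_left (by linarith)]
  ring

lemma continuous_linearExtension (hab : a ≤ b) (hu : ContinuousOn u (Icc a b)) :
    Continuous (linearExtension u a b α β) := by
  have hclamp : Continuous fun θ => u (max a (min θ b)) :=
    hu.comp_continuous (by fun_prop) fun θ =>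
      ⟨le_max_left _ _, max_le hab (min_le_right _ _)⟩
  exact (hclamp.add (by fun_prop)).add (by fun_prop)

lemma line_le_linearExtension (hab : a ≤ b) (hα : α ≤ s) (hβ : s ≤ β)
    (hline : ∀ t ∈ Icc a b, c + s * (t - k) ≤ u t) (θ : ℝ) :
    c + s * (θ - k) ≤ linearExtension u a b α β θ := by
  rcases le_total θ a with ha | ha
  · rw [linearExtension_of_le hab ha]
    have := mul_le_mul_of_nonpos_right hα (sub_nonpos.2 ha)
    linarith [hline a (left_mem_Icc.2 hab)]
  rcases le_total θ b with hb | hb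
  · rw [linearExtension_of_mem_Icc ⟨ha, hb⟩]
    exact hline θ ⟨ha, hb⟩
  · rw [linearExtension_of_ge hab hb]
    have := mul_le_mul_of_nonneg_right hβ (sub_nonneg.2 hb)
    linarith [hline b (right_mem_Icc.2 hab)]

lemma exists_line_le_linearExtension (hab : a ≤ b) (hu : ConvexOn ℝ (Icc a b) u)
    (hd : ∀ x ∈ Icc a b, HasDerivAt u (u' x) x) (hα : α ≤ u' a) (hβ : u' b ≤ β) (m : ℝ) :
    ∃ s, ∀ θ, linearExtension u a b α β m + s * (θ - m) ≤ linearExtension u a b α β θ := by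
  have ha : a ∈ Icc a b := left_mem_Icc.2 hab
  have hb : b ∈ Icc a b := right_mem_Icc.2 hab
  have hmono : MonotoneOn u' (Icc a b) := monotoneOn_of_convexOn_of_hasDerivAt hu hd
  have hαβ : α ≤ β := hα.trans ((hmono ha hb hab).trans hβ)
  rcases le_total m a with hma | hma
  · refine ⟨α, fun θ => ?_⟩
    have hline : ∀ t ∈ Icc a b, u a + α * (t - a) ≤ u t := fun t ht =>
      (add_le_add_right (mul_le_mul_of_nonneg_right hα (sub_nonneg.2 ht.1)) _).trans
        (tangent_le_of_convexOn hu ha ht (hd a ha))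
    rw [linearExtension_of_le hab hma]
    linarith [line_le_linearExtension hab le_rfl hαβ hline θ]
  rcases le_total m b with hmb | hmb
  · have hm : m ∈ Icc a b := ⟨hma, hmb⟩
    refine ⟨u' m, ?_⟩
    rw [linearExtension_of_mem_Icc hm]
    exact line_le_linearExtension hab (hα.trans (hmono ha hm hma)) ((hmono hm hb hmb).trans hβ)
      fun t ht => tangent_le_of_convexOn hu hm ht (hd m hm)
  · refine ⟨β, fun θ => ?_⟩
    have hline : ∀ t ∈ Icc a b, u b + β * (t - b) ≤ u t := fun t ht =>
      (add_le_add_right (mul_le_mul_of_nonpos_right hβ (sub_nonpos.2 ht.2)) _).trans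
        (tangent_le_of_convexOn hu hb ht (hd b hb))
    rw [linearExtension_of_ge hab hmb]
    linarith [line_le_linearExtension hab hαβ le_rfl hline θ]

lemma isPrice_linearExtension (hab : a ≤ b) (hu : ConvexOn ℝ (Icc a b) u)
    (hd : ∀ x ∈ Icc a b, HasDerivAt u (u' x) x) (hα : α ≤ u' a) (hβ : u' b ≤ β)
    (hleft : ∀ θ ∈ Icc 0 a, u θ ≤ u a + α * (θ - a))
    (hright : ∀ θ ∈ Icc b 1, u θ ≤ u b + β * (θ - b)) :
    IsPrice u (linearExtension u a b α β) := by
  intro m hm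
  have hmajor : u m ≤ linearExtension u a b α β m := by
    rcases le_total m a with ha | ha
    · exact (hleft m ⟨hm.1, ha⟩).trans_eq (linearExtension_of_le hab ha).symm
    rcases le_total m b with hb | hb
    · exact (linearExtension_of_mem_Icc ⟨ha, hb⟩).ge
    · exact (hright m ⟨hb, hm.2⟩).trans_eq (linearExtension_of_ge hab hb).symm
  obtain ⟨s, hs⟩ := exists_line_le_linearExtension hab hu hd hα hβ m
  exact ⟨s, fun θ _ => (add_le_add_left hmajor _).trans (hs θ)⟩

end LinearExtension

section TwoSidedPooling

variable {f u : ℝ → ℝ} {a b x α β : ℝ}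

lemma isPoolingSet_Ico_union_Ioc (ha : a ≤ 1) (hb : 0 ≤ b) :
    IsPoolingSet (Ico 0 a ∪ Ioc b 1) := by
  refine ⟨Iio a ∪ Ioi b, isOpen_Iio.union isOpen_Ioi, ?_⟩
  ext x
  simp only [mem_union, mem_Ico, mem_Ioc, mem_inter_iff, mem_Iio, mem_Ioi, mem_Icc]
  grind

lemma separatedNhds_Ico_Ioc (hab : a ≤ b) : SeparatedNhds (Ico 0 a) (Ioc b 1) :=
  ⟨Iio a, Ioi b, isOpen_Iio, isOpen_Ioi, fun _ h => h.2, fun _ h => h.1,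
    (Iic_disjoint_Ioi hab).mono_left Iio_subset_Iic_self⟩

lemma component_twoSided_left (hab : a ≤ b) (hx : x ∈ Ico 0 a) :
    connectedComponentIn (Ico 0 a ∪ Ioc b 1) x = Ico 0 a :=
  connectedComponentIn_union_eq_left (separatedNhds_Ico_Ioc hab) isPreconnected_Ico hx

lemma component_twoSided_right (hab : a ≤ b) (hx : x ∈ Ioc b 1) :
    connectedComponentIn (Ico 0 a ∪ Ioc b 1) x = Ioc b 1 := by
  rw [union_comm]
  exact connectedComponentIn_union_eq_left (separatedNhds_Ico_Ioc hab).symm isPreconnected_Ioc hx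

lemma poolMean_twoSided_left (hab : a ≤ b) (hx : x ∈ Ico 0 a) :
    poolMean f (Ico 0 a ∪ Ioc b 1) x = condMean f 0 a := by
  have ha : 0 < a := hx.1.trans_lt hx.2
  rw [poolMean_of_mem (Or.inl hx), compInf, compSup, component_twoSided_left hab hx,
    csInf_Ico ha, csSup_Ico ha]

lemma poolMean_twoSided_right (hab : a ≤ b) (hx : x ∈ Ioc b 1) :
    poolMean f (Ico 0 a ∪ Ioc b 1) x = condMean f b 1 := by
  have hb : b < 1 := hx.1.trans_le hx.2
  rw [poolMean_of_mem (Or.inr hx), compInf, compSup, component_twoSided_right hab hx,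
    csInf_Ioc hb, csSup_Ioc hb]

theorem isOptimal_twoSided_of_isPrice (hf : IsDensity f) (hu : ContinuousOn u (Icc 0 1))
    (ha : 0 ≤ a) (hab : a ≤ b) (hb : b ≤ 1)
    (hprice : IsPrice u (linearExtension u a b α β))
    (htanL : u (condMean f 0 a) + α * (a - condMean f 0 a) = u a)
    (htanH : u (condMean f b 1) + β * (b - condMean f b 1) = u b) :
    IsOptimal f u (Ico 0 a ∪ Ioc b 1) := by
  have hcont : Continuous (linearExtension u a b α β) :=
    continuous_linearExtension hab (hu.mono (Icc_subset_Icc ha hb))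
  refine hprice.isOptimal hf hu (hf.2.1.continuousOn_mul hcont.continuousOn isCompact_Icc)
    (isPoolingSet_Ico_union_Ioc (hab.trans hb) (ha.trans hab)) ?_ fun θ hθ => ?_
  · rintro x (hx | hx)
    · rw [component_twoSided_left hab hx, poolMean_twoSided_left hab hx]
      refine ⟨α, fun θ hθ => ?_⟩
      rw [linearExtension_of_le hab hθ.2.le]
      linarith
    · rw [component_twoSided_right hab hx, poolMean_twoSided_right hab hx]
      refine ⟨β, fun θ hθ => ?_⟩
      rw [linearExtension_of_ge hab hθ.1.le]
      linarith
  · exact linearExtension_of_mem_Icc ⟨not_lt.1 fun h => hθ.2 (Or.inl ⟨hθ.1.1, h⟩),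
      not_lt.1 fun h => hθ.2 (Or.inr ⟨h, hθ.1.2⟩)⟩

lemma isPrice_linearExtension_of_tangent {u' : ℝ → ℝ} {θL θH mL mH : ℝ}
    (hd : ∀ θ ∈ Icc (0 : ℝ) 1, HasDerivAt u (u' θ) θ)
    (hconcL : ConcaveOn ℝ (Icc 0 θL) u) (hconv : ConvexOn ℝ (Icc θL θH) u)
    (hconcH : ConcaveOn ℝ (Icc θH 1) u)
    (ha : θL < a) (hab : a ≤ b) (hb : b < θH) (hmL : mL ∈ Icc 0 θL) (hmH : mH ∈ Icc θH 1)
    (htanL : u mL + u' mL * (a - mL) = u a) (htanH : u mH + u' mH * (b - mH) = u b) :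
    IsPrice u (linearExtension u a b (u' mL) (u' mH)) := by
  have hL : θL ∈ Icc 0 θL := right_mem_Icc.2 (hmL.1.trans hmL.2)
  have hH : θH ∈ Icc θH 1 := left_mem_Icc.2 (hmH.1.trans hmH.2)
  have hLV : θL ∈ Icc θL θH := left_mem_Icc.2 (ha.le.trans (hab.trans hb.le))
  have hHV : θH ∈ Icc θL θH := right_mem_Icc.2 (ha.le.trans (hab.trans hb.le))
  have haV : a ∈ Icc θL θH := ⟨ha.le, hab.trans hb.le⟩
  have hbV : b ∈ Icc θL θH := ⟨ha.le.trans hab, hb.le⟩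
  have hVI : Icc θL θH ⊆ Icc 0 1 := Icc_subset_Icc hL.1 hH.2
  have hsub : Icc a b ⊆ Icc θL θH := Icc_subset_Icc ha.le hb.le
  have hdmL : HasDerivAt u (u' mL) mL := hd mL ⟨hmL.1, hmL.2.trans (hVI hLV).2⟩
  have hdmH : HasDerivAt u (u' mH) mH := hd mH ⟨(hVI hHV).1.trans hmH.1, hmH.2⟩
  have hbelowL := fun t (ht : t ∈ Icc 0 θL) => le_tangent_of_concaveOn hconcL hmL ht hdmL
  have hbelowH := fun t (ht : t ∈ Icc θH 1) => le_tangent_of_concaveOn hconcH hmH ht hdmH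
  have hslopeL := slope_sub_mul_nonneg_of_convexOn hconv hLV haV (hd a (hVI haV))
    (hbelowL θL hL) htanL
  have hslopeH := slope_sub_mul_nonneg_of_convexOn hconv hHV hbV (hd b (hVI hbV))
    (hbelowH θH hH) htanH
  refine isPrice_linearExtension hab (hconv.subset hsub (convex_Icc a b))
    (fun x hx => hd x (hVI (hsub hx)))
    (sub_nonneg.1 (nonneg_of_mul_nonneg_left hslopeL (sub_pos.2 ha)))
    (sub_nonpos.1 (nonpos_of_mul_nonneg_left hslopeH (sub_neg.2 hb)))
    (fun θ hθ => ?_) fun θ hθ => ?_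
  · have hθle : u θ ≤ u mL + u' mL * (θ - mL) := (le_total θ θL).elim
      (fun h => hbelowL θ ⟨hθ.1, h⟩)
      fun h => le_line_of_convexOn hconv hLV haV (hbelowL θL hL) htanL.ge
        (mem_uIcc_of_le h hθ.2)
    linarith
  · have hθle : u θ ≤ u mH + u' mH * (θ - mH) := (le_total θH θ).elim
      (fun h => hbelowH θ ⟨h, hθ.2⟩)
      fun h => le_line_of_convexOn hconv hHV hbV (hbelowH θH hH) htanH.ge
        (mem_uIcc_of_ge hθ.1 h)
    linarith

end TwoSidedPooling

theorem two_sided_pooling_optimal_general {f u u' : ℝ → ℝ} (hf : IsDensity f)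
    (hd : ∀ θ ∈ Icc (0 : ℝ) 1, HasDerivAt u (u' θ) θ) {θL θH θsL θsH : ℝ}
    (hθL : 0 ≤ θL) (hθH : θH ≤ 1)
    (hconcL : ConcaveOn ℝ (Icc 0 θL) u) (hconv : StrictConvexOn ℝ (Icc θL θH) u)
    (hconcH : ConcaveOn ℝ (Icc θH 1) u)
    (h1 : θL < θsL) (h12 : θsL ≤ θsH) (h2 : θsH < θH)
    (htanL : u (condMean f 0 θsL) +
        u' (condMean f 0 θsL) * (θsL - condMean f 0 θsL) = u θsL)
    (htanH : u (condMean f θsH 1) +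
        u' (condMean f θsH 1) * (θsH - condMean f θsH 1) = u θsH) :
    IsOptimal f u (Ico 0 θsL ∪ Ioc θsH 1) ∧
    condMean f 0 θsL ∈ Ioo 0 θL ∧ condMean f θsH 1 ∈ Ioo θH 1 := by
  have hmL := hf.condMean_mem_Ioo le_rfl (show 0 < θsL by linarith) (by linarith)
  have hmH := hf.condMean_mem_Ioo (show 0 ≤ θsH by linarith) (show θsH < 1 by linarith) le_rfl
  have hmL_lt : condMean f 0 θsL < θL := by
    by_contra! h
    exact (tangent_lt_of_strictConvexOn hconv ⟨h, by linarith [hmL.2]⟩ ⟨h1.le, by linarith⟩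
      hmL.2.ne (hd _ ⟨hmL.1.le, by linarith [hmL.2]⟩)).ne htanL
  have hmH_gt : θH < condMean f θsH 1 := by
    by_contra! h
    exact (tangent_lt_of_strictConvexOn hconv ⟨by linarith [hmH.1], h⟩ ⟨by linarith, h2.le⟩
      hmH.1.ne' (hd _ ⟨by linarith [hmH.1], hmH.2.le⟩)).ne htanH
  have hprice := isPrice_linearExtension_of_tangent hd hconcL hconv.convexOn hconcH h1 h12 h2
    ⟨hmL.1.le, hmL_lt.le⟩ ⟨hmH_gt.le, hmH.2.le⟩ htanL htanH
  exact ⟨isOptimal_twoSided_of_isPrice hf (HasDerivAt.continuousOn hd) (by linarith) h12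
    (by linarith) hprice htanL htanH, ⟨hmL.1, hmL_lt⟩, hmH_gt, hmH.2⟩

/-- two inflection points `θ^L < θ^H`; if the two tangency
conditions hold at `θ_*^L < θ_*^H` in `(θ^L,θ^H)`, then the pooling set
`[0,θ_*^L) ∪ (θ_*^H,1]` is optimal for `u`; moreover `m_*^L ∈ (0,θ^L)` and
`m_*^H ∈ (θ^H,1)`. -/
theorem two_sided_pooling_optimal (f : ℝ → ℝ) (hf : IsDensity f)
    (u u' u'' : ℝ → ℝ) (hu : C1AC u u' u'')
    (θL θH : ℝ) (hθL : θL ∈ Ioo (0:ℝ) 1) (hθH : θH ∈ Ioo (0:ℝ) 1) (hLH : θL < θH)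
    (hneg1 : ∀ θ ∈ Ico (0:ℝ) θL, u'' θ < 0)
    (hpos : ∀ θ ∈ Ioo θL θH, 0 < u'' θ)
    (hneg2 : ∀ θ ∈ Ioc θH (1:ℝ), u'' θ < 0)
    (θsL θsH : ℝ) (h1 : θsL ∈ Ioo θL θH) (h2 : θsH ∈ Ioo θL θH) (h12 : θsL < θsH)
    (htanL : u (condMean f 0 θsL) +
        u' (condMean f 0 θsL) * (θsL - condMean f 0 θsL) = u θsL)
    (htanH : u (condMean f θsH 1) +
        u' (condMean f θsH 1) * (θsH - condMean f θsH 1) = u θsH) :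
    IsOptimal f u (Ico (0:ℝ) θsL ∪ Ioc θsH 1) ∧
    condMean f 0 θsL ∈ Ioo 0 θL ∧ condMean f θsH 1 ∈ Ioo θH 1 := by
  exact two_sided_pooling_optimal_general hf hu.1 hθL.1.le hθH.2.le
    (hu.strictConcaveOn le_rfl hθL.2.le fun θ hθ => hneg1 θ ⟨hθ.1.le, hθ.2⟩).concaveOn
    (hu.strictConvexOn hθL.1.le hθH.2.le hpos)
    (hu.strictConcaveOn hθH.1.le le_rfl fun θ hθ => hneg2 θ ⟨hθ.1, hθ.2.le⟩).concaveOn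
    h1.1 h12.le h2.2 htanL htanH
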